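/- The genus-2 surface group contains surface subgroups of every genus: for every g ≥ 2, the genus-2 surface group Σ₂ contains a subgroup of index g - 1 that is isomorphic to the genus-g surface group Σ_g. -/

import Mathlib

/-!
Let `a, b` be the first pair of generators of `Σ_{h+1}`, so that the relation reads `[a,b] w = 1`
with `w` the surface relator of the remaining `h` handles. The `n`-fold cyclic cover unwrapping `a`
corresponds to the map `Σ_{nh+1} → Σ_{h+1}` that sends the first pair of generators to `aⁿ, b` and
the `i`-th block of `h` handles to the conjugate by `aⁱ` of the handles of `w`. It is well defined
because `∏ aⁱ w a⁻ⁱ = ∏ aⁱ [b,a] a⁻ⁱ` telescopes to `[b,aⁿ]`.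

Conversely `Σ_{h+1}` acts on `n` copies of `Σ_{nh+1}`, permuted cyclically by `a`. This action makes
`(i, x) ↦ a⁻ⁱ φ(x)` a bijection onto `Σ_{h+1}`, where `φ` is the map above. Hence `φ` is injective
and its image has the `a⁻ⁱ` as a left transversal.
-/

/-- The surface relator `[a₁,b₁] ⋯ [a_g,b_g]` in the free group on `a₁,b₁,…,a_g,b_g`. -/
def surfaceRelator (g : ℕ) : FreeGroup (Fin g ⊕ Fin g) :=
  (List.ofFn fun i : Fin g =>
    FreeGroup.of (Sum.inl i) * FreeGroup.of (Sum.inr i) *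
      (FreeGroup.of (Sum.inl i))⁻¹ * (FreeGroup.of (Sum.inr i))⁻¹).prod

/-- The genus-`g` surface group `Σ_g = ⟨a₁,b₁,…,a_g,b_g ∣ [a₁,b₁]⋯[a_g,b_g]⟩`. -/
abbrev SurfaceGroup (g : ℕ) : Type :=
  PresentedGroup ({surfaceRelator g} : Set (FreeGroup (Fin g ⊕ Fin g)))

open Function
open scoped commutatorElement

section PartialProducts

variable {M N : Type*} [Monoid M] [Monoid N] {n : ℕ}

theorem partialProd_last (v : Fin n → M) :
    Fin.partialProd v (Fin.last n) = (List.ofFn v).prod := by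
  simp [Fin.partialProd, List.take_of_length_le]

theorem map_partialProd (φ : M →* N) (v : Fin n → M) (i : Fin (n + 1)) :
    φ (Fin.partialProd v i) = Fin.partialProd (φ ∘ v) i := by
  simp only [Fin.partialProd, map_list_prod, List.map_take, List.map_ofFn]

end PartialProducts

section Groups

variable {G K ι : Type*} [Group G] [Group K]

theorem partialProd_conj_pow_commutatorElement {n : ℕ} (a b : G) (k : Fin (n + 1)) :
    Fin.partialProd (fun i : Fin n => MulAut.conj (a ^ (i : ℕ)) ⁅b, a⁆) k = ⁅b, a ^ (k : ℕ)⁆ := by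
  induction k using Fin.induction with
  | zero => simp
  | succ k ih =>
    rw [Fin.partialProd_succ, ih, MulAut.conj_apply, Fin.val_castSucc, Fin.val_succ, pow_succ]
    simp only [commutatorElement_def]
    group

theorem injective_and_index_range_of_bijective (φ : G →* K) (r : ι → K)
    (hr : Bijective fun p : ι × G => r p.1 * φ p.2) :
    Injective φ ∧ φ.range.index = Nat.card ι := by
  refine ⟨fun x y hxy => ?_, ?_⟩
  · obtain ⟨⟨i, -⟩, -⟩ := hr.surjective 1
    exact congrArg Prod.snd (hr.injective (a₁ := (i, x)) (a₂ := (i, y)) (by simp only [hxy]))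
  · refine (Nat.card_eq_of_bijective (fun i => (r i : K ⧸ φ.range)) ⟨fun i j hij => ?_, ?_⟩).symm
    · obtain ⟨y, hy⟩ := QuotientGroup.eq.mp hij
      exact congrArg Prod.fst
        (hr.injective (a₁ := (i, y)) (a₂ := (j, 1)) (by simp only [hy, map_one]; group))
    · intro q
      obtain ⟨s, rfl⟩ := QuotientGroup.mk_surjective q
      obtain ⟨⟨i, x⟩, rfl⟩ := hr.surjective s
      exact ⟨i, QuotientGroup.eq.mpr ⟨x, by simp⟩⟩

end Groups

section Equivariance

variable {G X Y : Type*} [Group G]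

/-- The elements of `G` whose actions on `X` and `Y` are intertwined by `f : X → Y`. As they form a
subgroup, equivariance of `f` only has to be checked on generators. -/
def semiconjSubgroup (f : X → Y) (ρ : G →* Equiv.Perm X) (τ : G →* Equiv.Perm Y) :
    Subgroup G where
  carrier := {s | Semiconj f (ρ s) (τ s)}
  one_mem' := by simpa using Semiconj.id_right
  mul_mem' hs ht := by simpa using hs.comp_right ht
  inv_mem' {s} hs := by
    simpa using hs.inverses_right (ρ s).right_inv (τ s).left_inv

end Equivariance

section CyclicAction

variable {G ι : Type*} [Group G] {n : ℕ}

/-- The action of `ι → G` on `ι` copies of `G` by left multiplication on each copy. -/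
def fiberMul : (ι → G) →* Equiv.Perm (ι × G) where
  toFun v := Equiv.prodShear (Equiv.refl ι) fun i => Equiv.mulLeft (v i)
  map_one' := by ext p <;> simp
  map_mul' v w := by ext p <;> simp

@[simp]
theorem fiberMul_apply (v : ι → G) (i : ι) (x : G) : fiberMul v (i, x) = (i, v i * x) := rfl

/-- The cyclic shift of `n + 1` copies of `G` that lowers the index by one and multiplies by `t`
when it passes from copy `0` to copy `n`. It is the monodromy of the unwrapped generator. -/
def cyclicShift (n : ℕ) (t : G) : Equiv.Perm (Fin (n + 1) × G) :=
  (finRotate (n + 1)).symm.prodCongr (Equiv.refl G) * fiberMul (Pi.mulSingle 0 t)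

@[simp]
theorem cyclicShift_zero (t x : G) : cyclicShift n t (0, x) = (Fin.last n, t * x) := by
  have : (finRotate (n + 1)).symm 0 = Fin.last n := by rw [Equiv.symm_apply_eq]; simp
  simp [cyclicShift, this]

@[simp]
theorem cyclicShift_succ (t x : G) (i : Fin n) :
    cyclicShift n t (i.succ, x) = (i.castSucc, x) := by
  have : (finRotate (n + 1)).symm i.succ = i.castSucc := by rw [Equiv.symm_apply_eq]; simp
  simp [cyclicShift, this]

theorem cyclicShift_pow_apply (t x : G) (i : Fin (n + 1)) :
    (cyclicShift n t ^ (i : ℕ)) (i, x) = (0, x) := by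
  induction i using Fin.induction with
  | zero => rfl
  | succ i ih => rwa [Fin.val_succ, pow_succ, Equiv.Perm.mul_apply, cyclicShift_succ]

theorem cyclicShift_pow_succ_apply_zero (t x : G) :
    (cyclicShift n t ^ (n + 1)) (0, x) = (0, t * x) := by
  rw [pow_succ, Equiv.Perm.mul_apply, cyclicShift_zero]
  exact cyclicShift_pow_apply t _ (Fin.last n)

/-- The permutation of `n + 1` copies of `G` by which `b` has to act when `a` acts by
`cyclicShift n t` and the product of the remaining handles acts by `fiberMul v`. -/
def cyclicDual (b : G) (v : Fin (n + 1) → G) : Equiv.Perm (Fin (n + 1) × G) :=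
  fiberMul fun i => (Fin.partialProd v i.castSucc)⁻¹ * b

theorem commutatorElement_cyclicShift_cyclicDual {t b : G} {v : Fin (n + 1) → G}
    (h : ⁅t, b⁆ * (List.ofFn v).prod = 1) :
    ⁅cyclicShift n t, cyclicDual b v⁆ * fiberMul v = 1 := by
  have last : (v (Fin.last n))⁻¹ * (Fin.partialProd v (Fin.last n).castSucc)⁻¹ = ⁅t, b⁆ := by
    rw [← mul_inv_rev, ← Fin.partialProd_succ, Fin.succ_last, partialProd_last,
      eq_inv_of_mul_eq_one_left h]
  have swap : cyclicShift n t * cyclicDual b v =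
      fiberMul v⁻¹ * cyclicDual b v * cyclicShift n t := by
    ext1 ⟨i, x⟩
    cases i using Fin.cases with
    | zero => simp [-map_inv, cyclicDual, ← mul_assoc, last, commutatorElement_def]
    | succ i => simp [-map_inv, cyclicDual, Fin.partialProd_succ, mul_assoc]
  rw [commutatorElement_def, swap, map_inv]
  group

end CyclicAction

namespace SurfaceGroup

section Blocks

variable {G : Type*} [Group G] {n h : ℕ}

theorem lift_surfaceRelator {g : ℕ} (u : Fin g ⊕ Fin g → G) :
    FreeGroup.lift u (surfaceRelator g) =
      (List.ofFn fun i => ⁅u (Sum.inl i), u (Sum.inr i)⁆).prod := by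
  simp [surfaceRelator, map_list_prod, List.map_ofFn, comp_def, commutatorElement_def]

/-- The place of the generators of the `i`-th block of `h` handles among the generators of
`Σ_{nh+1}`, when its handles are divided into the `0`-th one and `n` successive blocks. -/
def blockIndex (i : Fin n) : Fin h ⊕ Fin h → Fin (n * h + 1) ⊕ Fin (n * h + 1) :=
  Sum.map (fun j => (finProdFinEquiv (i, j)).succ) (fun j => (finProdFinEquiv (i, j)).succ)

theorem lift_surfaceRelator_blocks (u : Fin (n * h + 1) ⊕ Fin (n * h + 1) → G) :
    FreeGroup.lift u (surfaceRelator (n * h + 1)) =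
      ⁅u (Sum.inl 0), u (Sum.inr 0)⁆ *
        (List.ofFn fun i => FreeGroup.lift (u ∘ blockIndex i) (surfaceRelator h)).prod := by
  simp only [lift_surfaceRelator, List.ofFn_succ, List.prod_cons, List.ofFn_mul, List.prod_flatten,
    List.map_ofFn, comp_def, blockIndex, finProdFinEquiv, Equiv.coe_fn_mk, Sum.map_inl, Sum.map_inr,
    mul_comm h, add_comm]

/-- The generator `a₁` of a surface group of positive genus. -/
def a₁ {g : ℕ} : SurfaceGroup (g + 1) := PresentedGroup.of (Sum.inl 0)

/-- The generator `b₁` of a surface group of positive genus. -/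
def b₁ {g : ℕ} : SurfaceGroup (g + 1) := PresentedGroup.of (Sum.inr 0)

/-- The free group on the generators of the `i`-th block of `h` handles, mapped to `Σ_{nh+1}`. -/
def block (i : Fin n) : FreeGroup (Fin h ⊕ Fin h) →* SurfaceGroup (n * h + 1) :=
  FreeGroup.lift (PresentedGroup.of ∘ blockIndex i)

theorem commutatorElement_mul_prod_block :
    ⁅(a₁ : SurfaceGroup (n * h + 1)), b₁⁆ *
      (List.ofFn fun i : Fin n => block i (surfaceRelator h)).prod = 1 := by
  have mk_eq : PresentedGroup.mk {surfaceRelator (n * h + 1)} =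
      FreeGroup.lift PresentedGroup.of := by ext; simp [PresentedGroup.of]
  exact (lift_surfaceRelator_blocks _).symm.trans
    (mk_eq ▸ PresentedGroup.one_of_mem (Set.mem_singleton _))

theorem eq_top_of_block_mem {H : Subgroup (SurfaceGroup (n * h + 1))} (ha : a₁ ∈ H) (hb : b₁ ∈ H)
    (hblock : ∀ i x, block i x ∈ H) : H = ⊤ := by
  have of_mem (i : Fin n) (s : Fin h ⊕ Fin h) : PresentedGroup.of (blockIndex i s) ∈ H := by
    simpa [block] using hblock i (FreeGroup.of s)
  refine (Subgroup.eq_top_iff' H).mpr (PresentedGroup.generated_by _ H ?_)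
  rintro (k | k)
  · refine Fin.cases ha (finProdFinEquiv.surjective.forall.mpr ?_) k
    exact fun p => of_mem p.1 (Sum.inl p.2)
  · refine Fin.cases hb (finProdFinEquiv.surjective.forall.mpr ?_) k
    exact fun p => of_mem p.1 (Sum.inr p.2)

section Lift

variable (a b : G) (f : Fin n → FreeGroup (Fin h ⊕ Fin h) →* G)

/-- The images of the generators of `Σ_{nh+1}` under the homomorphism that maps `a₁` to `a`, `b₁`
to `b` and is given by `f i` on the `i`-th block of `h` handles. -/
def liftGen : Fin (n * h + 1) ⊕ Fin (n * h + 1) → G :=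
  Sum.elim (Fin.cons a fun k => f k.divNat (FreeGroup.of (Sum.inl k.modNat)))
    (Fin.cons b fun k => f k.divNat (FreeGroup.of (Sum.inr k.modNat)))

theorem lift_liftGen_comp_blockIndex (i : Fin n) :
    FreeGroup.lift (liftGen a b f ∘ blockIndex i) = f i := by
  have divMod (j : Fin h) : ((finProdFinEquiv (i, j)).divNat, (finProdFinEquiv (i, j)).modNat) =
    (i, j) := finProdFinEquiv.symm_apply_apply (i, j)
  simp only [Prod.mk.injEq] at divMod
  ext (j | j) <;> simp [liftGen, blockIndex, divMod]

variable {a b f} (hf : ⁅a, b⁆ * (List.ofFn fun i => f i (surfaceRelator h)).prod = 1)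

/-- The universal property of `Σ_{nh+1}`, with the handles other than the first one grouped into
`n` blocks of `h` handles. -/
def lift : SurfaceGroup (n * h + 1) →* G :=
  PresentedGroup.toGroup (f := liftGen a b f) <| by
    rintro _ rfl
    simp only [lift_surfaceRelator_blocks, lift_liftGen_comp_blockIndex]
    exact hf

@[simp]
theorem lift_a₁ : lift hf a₁ = a := PresentedGroup.toGroup.of _

@[simp]
theorem lift_b₁ : lift hf b₁ = b := PresentedGroup.toGroup.of _

@[simp]
theorem lift_block (i : Fin n) (x : FreeGroup (Fin h ⊕ Fin h)) : lift hf (block i x) = f i x := by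
  have : (lift hf).comp (block i) = FreeGroup.lift (liftGen a b f ∘ blockIndex i) := by
    ext s; simp [lift, block]
  rw [← lift_liftGen_comp_blockIndex a b f i, ← this, MonoidHom.comp_apply]

end Lift

end Blocks

section CyclicCover

variable {n h : ℕ}

theorem block_zero_surfaceRelator :
    block (0 : Fin 1) (surfaceRelator h) = ⁅(b₁ : SurfaceGroup (1 * h + 1)), a₁⁆ := by
  rw [← commutatorElement_inv]
  exact eq_inv_of_mul_eq_one_right (by simpa using commutatorElement_mul_prod_block (n := 1))

/-- The homomorphism of fundamental groups induced by the `n`-fold cyclic cover of the surface of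
genus `h + 1` that unwraps `a₁`. The genus of the base is written `1 * h + 1` so that the
description of surface groups by blocks of `h` handles applies to it as well. -/
def cyclicCover (n h : ℕ) : SurfaceGroup (n * h + 1) →* SurfaceGroup (1 * h + 1) :=
  lift (a := a₁ ^ n) (b := b₁)
    (f := fun i => (MulAut.conj (a₁ ^ (i : ℕ))).toMonoidHom.comp (block 0)) <| by
      have := partialProd_conj_pow_commutatorElement
        (a₁ : SurfaceGroup (1 * h + 1)) b₁ (Fin.last n)
      rw [partialProd_last, Fin.val_last, ← block_zero_surfaceRelator,
        ← commutatorElement_inv] at this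
      exact mul_eq_one_iff_eq_inv'.mpr this

theorem cyclicCover_a₁ : cyclicCover n h a₁ = a₁ ^ n := lift_a₁ _

theorem cyclicCover_b₁ : cyclicCover n h b₁ = b₁ := lift_b₁ _

theorem cyclicCover_block (i : Fin n) (x : FreeGroup (Fin h ⊕ Fin h)) :
    cyclicCover n h (block i x) = a₁ ^ (i : ℕ) * block 0 x * (a₁ ^ (i : ℕ))⁻¹ :=
  lift_block _ i x

theorem cyclicCover_partialProd_block (k : Fin (n + 1)) :
    cyclicCover n h (Fin.partialProd (fun i => block i (surfaceRelator h)) k) =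
      ⁅(b₁ : SurfaceGroup (1 * h + 1)), a₁ ^ (k : ℕ)⁆ := by
  rw [map_partialProd, ← partialProd_conj_pow_commutatorElement, ← block_zero_surfaceRelator]
  simp only [comp_def, cyclicCover_block, MulAut.conj_apply]

/-- The product of the transversal `1, a₁⁻¹, …, a₁⁻ⁿ` with the image of the covering group. -/
def transversalMul (n h : ℕ) (p : Fin (n + 1) × SurfaceGroup ((n + 1) * h + 1)) :
    SurfaceGroup (1 * h + 1) :=
  (a₁ ^ (p.1 : ℕ))⁻¹ * cyclicCover (n + 1) h p.2

/-- The left regular action of `Σ_{h+1}`, transported along `transversalMul`. Defining it through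
the universal property of `Σ_{h+1}` makes it available before `transversalMul` is known to be
bijective. -/
def monodromy (n h : ℕ) :
    SurfaceGroup (1 * h + 1) →* Equiv.Perm (Fin (n + 1) × SurfaceGroup ((n + 1) * h + 1)) :=
  lift (a := cyclicShift n a₁) (b := cyclicDual b₁ fun i => block i (surfaceRelator h))
    (f := fun _ => fiberMul.comp (MonoidHom.pi block)) <| by
      simp only [List.ofFn_succ, List.ofFn_zero, List.prod_singleton]
      exact commutatorElement_cyclicShift_cyclicDual commutatorElement_mul_prod_block

theorem monodromy_a₁ : monodromy n h a₁ = cyclicShift n a₁ := lift_a₁ _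

theorem monodromy_b₁ :
    monodromy n h b₁ = cyclicDual b₁ fun i => block i (surfaceRelator h) := lift_b₁ _

theorem monodromy_block_apply (x : FreeGroup (Fin h ⊕ Fin h)) (i : Fin (n + 1))
    (y : SurfaceGroup ((n + 1) * h + 1)) :
    monodromy n h (block 0 x) (i, y) = (i, block i x * y) := by
  simp [monodromy]

theorem monodromy_a₁_pow_apply (i : Fin (n + 1)) (y : SurfaceGroup ((n + 1) * h + 1)) :
    monodromy n h (a₁ ^ (i : ℕ)) (i, y) = (0, y) := by
  rw [map_pow, monodromy_a₁, cyclicShift_pow_apply]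

theorem monodromy_a₁_pow_inv_apply (i : Fin (n + 1)) (y : SurfaceGroup ((n + 1) * h + 1)) :
    monodromy n h (a₁ ^ (i : ℕ))⁻¹ (0, y) = (i, y) := by
  rw [map_inv, Equiv.Perm.inv_eq_iff_eq, monodromy_a₁_pow_apply]

theorem transversalMul_monodromy (s : SurfaceGroup (1 * h + 1))
    (p : Fin (n + 1) × SurfaceGroup ((n + 1) * h + 1)) :
    transversalMul n h (monodromy n h s p) = s * transversalMul n h p := by
  suffices semiconjSubgroup (transversalMul n h) (monodromy n h) (MulAction.toPermHom _ _) = ⊤ from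
    (this ▸ Subgroup.mem_top s : s ∈ semiconjSubgroup _ _ _) p
  refine eq_top_of_block_mem ?_ ?_ ?_
  · rintro ⟨i, y⟩
    cases i using Fin.cases with
    | zero => simp [transversalMul, monodromy_a₁, cyclicCover_a₁, pow_succ, mul_assoc]
    | succ i => simp [transversalMul, monodromy_a₁, pow_succ, mul_assoc]
  · rintro ⟨i, y⟩
    simp [transversalMul, monodromy_b₁, cyclicDual, cyclicCover_b₁, cyclicCover_partialProd_block,
      commutatorElement_def, mul_assoc]
  · rintro j x ⟨i, y⟩
    obtain rfl := Subsingleton.elim j 0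
    simp [transversalMul, monodromy_block_apply, cyclicCover_block, mul_assoc]

theorem monodromy_cyclicCover (x y : SurfaceGroup ((n + 1) * h + 1)) :
    monodromy n h (cyclicCover (n + 1) h x) (0, y) = (0, x * y) := by
  suffices semiconjSubgroup (Prod.mk 0) (MulAction.toPermHom _ _)
      ((monodromy n h).comp (cyclicCover (n + 1) h)) = ⊤ from
    ((this ▸ Subgroup.mem_top x : x ∈ semiconjSubgroup _ _ _) y).symm
  refine eq_top_of_block_mem (fun y => ?_) (fun y => ?_) (fun i x y => ?_)
  · simp [cyclicCover_a₁, monodromy_a₁, cyclicShift_pow_succ_apply_zero]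
  · simp [cyclicCover_b₁, monodromy_b₁, cyclicDual]
  · simp only [MonoidHom.comp_apply, cyclicCover_block, map_mul, Equiv.Perm.mul_apply,
      monodromy_a₁_pow_inv_apply, monodromy_block_apply, monodromy_a₁_pow_apply]
    rfl

theorem bijective_transversalMul : Bijective (transversalMul n h) := by
  refine bijective_iff_has_inverse.mpr ⟨fun s => monodromy n h s (0, 1), fun p => ?_, fun s => ?_⟩
  · simp only [transversalMul, map_mul, Equiv.Perm.mul_apply, monodromy_cyclicCover, mul_one,
      monodromy_a₁_pow_inv_apply]
  · exact (transversalMul_monodromy s (0, 1)).trans (by simp [transversalMul])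

theorem injective_and_index_range_cyclicCover :
    Injective (cyclicCover (n + 1) h) ∧ (cyclicCover (n + 1) h).range.index = n + 1 := by
  simpa using injective_and_index_range_of_bijective (cyclicCover (n + 1) h)
    (fun i : Fin (n + 1) => (a₁ ^ (i : ℕ))⁻¹) bijective_transversalMul

end CyclicCover

end SurfaceGroup

theorem genus_two_contains_all_genera_general (n h : ℕ) (hn : n ≠ 0) :
    ∃ H : Subgroup (SurfaceGroup (h + 1)),
      H.index = n ∧ Nonempty (H ≃* SurfaceGroup (n * h + 1)) := by
  obtain ⟨n, rfl⟩ := Nat.exists_eq_succ_of_ne_zero hn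
  suffices ∃ H : Subgroup (SurfaceGroup (1 * h + 1)),
      H.index = n + 1 ∧ Nonempty (H ≃* SurfaceGroup ((n + 1) * h + 1)) by
    rwa [one_mul] at this
  obtain ⟨injective, index⟩ := SurfaceGroup.injective_and_index_range_cyclicCover (n := n) (h := h)
  exact ⟨_, index, ⟨(MonoidHom.ofInjective injective).symm⟩⟩

/-- The genus-`2` surface group contains, for every `g ≥ 2`, a subgroup of index `g - 1`
isomorphic to the genus-`g` surface group. -/
theorem genus_two_contains_all_genera (g : ℕ) (hg : 2 ≤ g) :
    ∃ H : Subgroup (SurfaceGroup 2), H.index = g - 1 ∧ Nonempty (H ≃* SurfaceGroup g) := by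
  have covering := genus_two_contains_all_genera_general (g - 1) 1 (by lia)
  rwa [show (g - 1) * 1 + 1 = g by lia] at covering
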